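/- arXiv:2509.06692 — 3 statements merged into one kernel-verified Lean document; each statement's English description precedes it below -/
import Mathlib

section
/- For every fixed q ≥ 2 and fixed t ≥ 1, limsup_{n→∞} [ M*_q(n;t) · (q−1)^t · n^t / (t! · q^{n+t}) ] ≤ 1; that is, M*_q(n;t) ≲ t!·q^{n+t} / ((q−1)^t·n^t) as n → ∞. -/
/-!
The bound is a sphere-packing argument restricted to strings with a typical number of run
boundaries (positions `k` with `x k ≠ x (k + 1)`).

* Distinct sets of pairwise non-adjacent run boundaries give distinct transposed strings
  (`applyTo_injOn`): the first location in which two such sets differ is visible in the output.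
  A string with `r` boundaries has at least `(r - 3 t) ^ t / t!` sets of `t` pairwise non-adjacent
  boundaries (`pow_le_card_spaced`), hence `B(x;t)` has at least that many elements. As the balls
  around codewords are disjoint, there are at most `t! q ^ n / (a - 3 t) ^ t` codewords with more
  than `a` boundaries (`card_good_mul_le`).
* The generating function of the number of boundaries over all strings of length `m + 1` is
  `q (1 + (q - 1) z) ^ m` (`sum_pow_boundary`), so by a Chernoff bound the strings with at most
  `c m` boundaries, for fixed `c < p = (q - 1) / q`, form an exponentially small fraction of all
  strings (`exists_card_bad_le`).

Adding the two contributions, the `limsup` is at most `(p / c) ^ t` for every `c < p`, and `c → p`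
gives the claim.
-/

/-- Valid locations (0-indexed) for simultaneous disjoint transpositions in a string of
length `n`: each location `k` swaps positions `k` and `k+1`, and distinct locations
are at distance at least 2. -/
def ValidLocs (n : ℕ) (K : Finset ℕ) : Prop :=
  (∀ k ∈ K, k + 1 < n) ∧ ∀ k ∈ K, ∀ l ∈ K, k ≠ l → k + 2 ≤ l ∨ l + 2 ≤ k

/-- `y` is the result of applying the transpositions at the locations in `K` to `x`. -/
def ApplyLocs {n q : ℕ} (K : Finset ℕ) (x y : Fin n → Fin q) : Prop :=
  ∀ i : Fin n, y i =
    if h : (i : ℕ) ∈ K ∧ (i : ℕ) + 1 < n then x ⟨(i : ℕ) + 1, h.2⟩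
    else if (i : ℕ) ≠ 0 ∧ (i : ℕ) - 1 ∈ K then
      x ⟨(i : ℕ) - 1, lt_of_le_of_lt (Nat.sub_le _ _) i.isLt⟩
    else x i

/-- `B(x;t)`: the set of strings obtainable from `x` by at most `t` disjoint transpositions. -/
def BallB {n q : ℕ} (t : ℕ) (x : Fin n → Fin q) : Set (Fin n → Fin q) :=
  { y | ∃ K : Finset ℕ, K.card ≤ t ∧ ValidLocs n K ∧ ApplyLocs K x y }

/-- `dist(x,y) = min { t + s : B(x;t) ∩ B(y;s) ≠ ∅ }`, equal to `⊤` if no such `t,s` exist. -/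
noncomputable def tdist {n q : ℕ} (x y : Fin n → Fin q) : ℕ∞ :=
  sInf { d : ℕ∞ | ∃ t s : ℕ, d = ((t + s : ℕ) : ℕ∞) ∧ (BallB t x ∩ BallB s y).Nonempty }

/-- A code `C` corrects `t` transpositions. -/
def Corrects {n q : ℕ} (t : ℕ) (C : Set (Fin n → Fin q)) : Prop :=
  ∀ x ∈ C, ∀ x' ∈ C, x ≠ x' → BallB t x ∩ BallB t x' = ∅

/-- The number of runs of identical consecutive symbols in a string. -/
def runCount {n q : ℕ} (x : Fin n → Fin q) : ℕ :=
  if n = 0 then 0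
  else 1 + (Finset.univ.filter (fun i : Fin (n - 1) =>
      x ⟨(i : ℕ), by have := i.isLt; omega⟩ ≠ x ⟨(i : ℕ) + 1, by have := i.isLt; omega⟩)).card

/-- `M*_q(n;t)`: the maximum cardinality of a code in `Z_q^n` correcting `t` transpositions. -/
noncomputable def Mstar (q n t : ℕ) : ℕ :=
  sSup { m : ℕ | ∃ C : Finset (Fin n → Fin q),
    C.Nonempty ∧ Corrects t (↑C : Set (Fin n → Fin q)) ∧ C.card = m }

open Finset Filter Topology

/-! ### Sets of pairwise non-adjacent locations -/

/-- The `t`-element subsets of `S` whose distinct elements are at distance at least 2. -/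
noncomputable def spaced (S : Finset ℕ) (t : ℕ) : Finset (Finset ℕ) := by
  classical
  exact (S.powersetCard t).filter
    (fun K => ∀ k ∈ K, ∀ l ∈ K, k ≠ l → k + 2 ≤ l ∨ l + 2 ≤ k)

lemma mem_spaced {S : Finset ℕ} {t : ℕ} {K : Finset ℕ} :
    K ∈ spaced S t ↔ (K ⊆ S ∧ K.card = t) ∧
      ∀ k ∈ K, ∀ l ∈ K, k ≠ l → k + 2 ≤ l ∨ l + 2 ≤ k := by
  simp [spaced, mem_powersetCard]

/-- Each spaced `t`-set rules out at most `3 t` candidates for an extension by one location, and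
each spaced `(t + 1)`-set arises from at most `t + 1` spaced `t`-sets. -/
lemma card_spaced_succ (S : Finset ℕ) (t : ℕ) :
    (spaced S t).card * (S.card - 3 * t) ≤ (spaced S (t + 1)).card * (t + 1) := by
  classical
  apply Finset.card_mul_le_card_mul (fun K K' : Finset ℕ => K ⊆ K')
  · intro K hK
    obtain ⟨⟨hKS, hKc⟩, hKs⟩ := mem_spaced.1 hK
    set bad : Finset ℕ := K ∪ (K.image (· + 1) ∪ K.image (· - 1)) with hbad
    have hbc : bad.card ≤ 3 * t := by
      have h1 := card_union_le K (K.image (· + 1) ∪ K.image (· - 1))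
      have h2 := card_union_le (K.image (· + 1)) (K.image (· - 1))
      have h3 : (K.image (· + 1)).card ≤ K.card := card_image_le
      have h4 : (K.image (· - 1)).card ≤ K.card := card_image_le
      rw [hbad]
      omega
    have hnot : ∀ k ∈ S \ bad, k ∈ S ∧ k ∉ K ∧ ∀ l ∈ K, k + 2 ≤ l ∨ l + 2 ≤ k := by
      intro k hk
      simp only [hbad, Finset.mem_sdiff, mem_union, mem_image, not_or, not_exists, not_and] at hk
      refine ⟨hk.1, hk.2.1, fun l hl => ?_⟩
      have h1 := hk.2.2.1 l hl
      have h2 := hk.2.2.2 l hl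
      have h3 : l ≠ k := fun h => hk.2.1 (h ▸ hl)
      omega
    have hinj : Set.InjOn (fun k => insert k K) (S \ bad : Finset ℕ) := by
      intro a ha b hb hab
      have haK := (hnot a ha).2.1
      have : a ∈ insert b K := by
        have h : insert a K = insert b K := hab
        rw [← h]; exact mem_insert_self _ _
      rcases mem_insert.1 this with h | h
      · exact h
      · exact absurd h haK
    calc S.card - 3 * t ≤ S.card - bad.card := by omega
      _ ≤ (S \ bad).card := le_card_sdiff _ _
      _ = ((S \ bad).image (fun k => insert k K)).card := (card_image_of_injOn hinj).symm
      _ ≤ _ := by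
        apply card_le_card
        intro K' hK'
        obtain ⟨k, hk, rfl⟩ := mem_image.1 hK'
        obtain ⟨hkS, hkK, hkl⟩ := hnot k hk
        rw [mem_bipartiteAbove]
        refine ⟨mem_spaced.2 ⟨⟨insert_subset hkS hKS, by rw [card_insert_of_notMem hkK, hKc]⟩, ?_⟩,
          subset_insert _ _⟩
        intro a ha b hb hab
        rcases mem_insert.1 ha with rfl | ha' <;> rcases mem_insert.1 hb with rfl | hb'
        · exact absurd rfl hab
        · exact hkl b hb'
        · exact (hkl a ha').symm
        · exact hKs a ha' b hb' hab
  · intro K' hK'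
    obtain ⟨⟨hKS, hKc⟩, hKs⟩ := mem_spaced.1 hK'
    calc _ ≤ (K'.powersetCard t).card := by
          apply card_le_card
          intro K hK
          rw [mem_bipartiteBelow] at hK
          exact mem_powersetCard.2 ⟨hK.2, (mem_spaced.1 hK.1).1.2⟩
      _ = t + 1 := by rw [card_powersetCard, hKc]; simp

lemma pow_le_card_spaced_aux (S : Finset ℕ) (T : ℕ) : ∀ t, t ≤ T →
    (S.card - 3 * T) ^ t ≤ t.factorial * (spaced S t).card := by
  intro t
  induction t with
  | zero =>
    intro _
    have : (∅ : Finset ℕ) ∈ spaced S 0 := mem_spaced.2 (by simp)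
    have := card_pos.2 ⟨_, this⟩
    simpa using this
  | succ t ih =>
    intro h
    have h1 := ih (by omega)
    have h2 := card_spaced_succ S t
    calc (S.card - 3 * T) ^ (t + 1) = (S.card - 3 * T) ^ t * (S.card - 3 * T) := pow_succ _ _
      _ ≤ (t.factorial * (spaced S t).card) * (S.card - 3 * t) :=
        Nat.mul_le_mul h1 (by omega)
      _ = t.factorial * ((spaced S t).card * (S.card - 3 * t)) := by ring
      _ ≤ t.factorial * ((spaced S (t + 1)).card * (t + 1)) := Nat.mul_le_mul_left _ h2
      _ = _ := by rw [Nat.factorial_succ]; ring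

lemma pow_le_card_spaced (S : Finset ℕ) (t : ℕ) :
    (S.card - 3 * t) ^ t ≤ t.factorial * (spaced S t).card :=
  pow_le_card_spaced_aux S t t le_rfl

/-! ### Run boundaries and the size of balls -/

/-- The locations `i` at which the transposition changes `x`, i.e. the boundaries between
consecutive runs of `x`. -/
def boundary {m q : ℕ} (x : Fin (m + 1) → Fin q) : Finset (Fin m) :=
  univ.filter (fun i : Fin m => x i.castSucc ≠ x i.succ)

/-- The run boundaries of `x` as a set of natural numbers. -/
def boundaryNat {m q : ℕ} (x : Fin (m + 1) → Fin q) : Finset ℕ :=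
  (boundary x).map Fin.valEmbedding

lemma mem_boundaryNat {m q : ℕ} {x : Fin (m + 1) → Fin q} {k : ℕ} (hk : k ∈ boundaryNat x) :
    ∃ h : k < m, x ⟨k, by omega⟩ ≠ x ⟨k + 1, by omega⟩ := by
  simp only [boundaryNat, boundary, Finset.mem_map, mem_filter, mem_univ, true_and] at hk
  obtain ⟨i, hi, rfl⟩ := hk
  exact ⟨i.2, hi⟩

/-- The string obtained from `x` by the transpositions at the locations in `K`. -/
def applyTo {n q : ℕ} (x : Fin n → Fin q) (K : Finset ℕ) : Fin n → Fin q := fun i =>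
  if h : (i : ℕ) ∈ K ∧ (i : ℕ) + 1 < n then x ⟨(i : ℕ) + 1, h.2⟩
    else if (i : ℕ) ≠ 0 ∧ (i : ℕ) - 1 ∈ K then
      x ⟨(i : ℕ) - 1, lt_of_le_of_lt (Nat.sub_le _ _) i.isLt⟩
    else x i

/-- If two spaced sets of boundaries agree below `i` and give the same string, then a location
`i` of the first one belongs to the second one too. -/
lemma applyTo_step {m q t : ℕ} {x : Fin (m + 1) → Fin q} {K K' : Finset ℕ}
    (hK : K ∈ spaced (boundaryNat x) t) (h : applyTo x K = applyTo x K') (i : ℕ)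
    (ih : ∀ j < i, j ∈ K ↔ j ∈ K') (hi : i ∈ K) : i ∈ K' := by
  obtain ⟨⟨hKS, -⟩, hKs⟩ := mem_spaced.1 hK
  obtain ⟨him, hne⟩ := mem_boundaryNat (hKS hi)
  by_contra hi'
  have h1 := congrFun h ⟨i, by omega⟩
  have h2 : ¬ (i ≠ 0 ∧ i - 1 ∈ K') := by
    rintro ⟨h0, hm⟩
    have := hKs i hi (i - 1) ((ih (i - 1) (by omega)).2 hm) (by omega)
    omega
  unfold applyTo at h1
  rw [dif_pos ⟨hi, by simpa using him⟩, dif_neg (fun hh => hi' hh.1), if_neg h2] at h1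
  exact hne h1.symm

lemma applyTo_injOn {m q t : ℕ} (x : Fin (m + 1) → Fin q) :
    Set.InjOn (applyTo x) (spaced (boundaryNat x) t : Finset (Finset ℕ)) := by
  intro K hK K' hK' h
  ext i
  induction i using Nat.strong_induction_on with
  | _ i ih =>
    exact ⟨applyTo_step hK h i ih, applyTo_step hK' h.symm i (fun j hj => (ih j hj).symm)⟩

lemma applyTo_mem_ball {m q t : ℕ} (x : Fin (m + 1) → Fin q) {K : Finset ℕ}
    (hK : K ∈ spaced (boundaryNat x) t) : applyTo x K ∈ BallB t x := by
  obtain ⟨⟨hKS, hc⟩, hKs⟩ := mem_spaced.1 hK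
  refine ⟨K, hc.le, ⟨fun k hk => ?_, hKs⟩, fun i => rfl⟩
  obtain ⟨h, -⟩ := mem_boundaryNat (hKS hk)
  omega

/-- Sphere packing for the codewords with more than `a` run boundaries. -/
lemma card_good_mul_le {m q t : ℕ} {C : Finset (Fin (m + 1) → Fin q)}
    (hC : Corrects t (↑C : Set (Fin (m + 1) → Fin q))) (a : ℝ) (ha : 3 * t ≤ a) :
    ((C.filter (fun x => a < ((boundary x).card : ℝ))).card : ℝ) * (a - 3 * t) ^ t ≤
      t.factorial * (q : ℝ) ^ (m + 1) := by
  classical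
  set G := C.filter (fun x => a < ((boundary x).card : ℝ)) with hG
  have hdisj : ∀ x ∈ G, ∀ y ∈ G, x ≠ y →
      Disjoint ((spaced (boundaryNat x) t).image (applyTo x))
        ((spaced (boundaryNat y) t).image (applyTo y)) := by
    intro x hx y hy hxy
    rw [Finset.disjoint_left]
    intro z hz hz'
    obtain ⟨K, hK, rfl⟩ := mem_image.1 hz
    obtain ⟨K', hK', he⟩ := mem_image.1 hz'
    have hE := hC x (mem_filter.1 hx).1 y (mem_filter.1 hy).1 hxy
    have : applyTo x K ∈ BallB t x ∩ BallB t y :=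
      ⟨applyTo_mem_ball x hK, he ▸ applyTo_mem_ball y hK'⟩
    rw [hE] at this
    exact this
  have hsum : ∑ x ∈ G, (spaced (boundaryNat x) t).card ≤ q ^ (m + 1) := by
    calc ∑ x ∈ G, (spaced (boundaryNat x) t).card
        = ∑ x ∈ G, ((spaced (boundaryNat x) t).image (applyTo x)).card :=
          sum_congr rfl fun x _ => (card_image_of_injOn (applyTo_injOn x)).symm
      _ = (G.biUnion fun x => (spaced (boundaryNat x) t).image (applyTo x)).card :=
          (card_biUnion hdisj).symm
      _ ≤ (univ : Finset (Fin (m + 1) → Fin q)).card := card_le_card (subset_univ _)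
      _ = q ^ (m + 1) := by simp
  have hlow : ∀ x ∈ G, (a - 3 * t) ^ t ≤
      (t.factorial : ℝ) * ((spaced (boundaryNat x) t).card : ℝ) := by
    intro x hx
    have hx2 := (mem_filter.1 hx).2
    have h1 := pow_le_card_spaced (boundaryNat x) t
    have h2 : (((boundaryNat x).card - 3 * t : ℕ) : ℝ) ^ t ≤
      (t.factorial : ℝ) * ((spaced (boundaryNat x) t).card : ℝ) := by exact_mod_cast h1
    refine le_trans (pow_le_pow_left₀ (by linarith) ?_ t) h2
    have h3 : ((boundary x).card : ℝ) ≤ (((boundaryNat x).card - 3 * t : ℕ) : ℝ) + 3 * t := by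
      have : (boundary x).card ≤ ((boundaryNat x).card - 3 * t) + 3 * t := by
        rw [boundaryNat, card_map]; omega
      exact_mod_cast this
    linarith
  calc (G.card : ℝ) * (a - 3 * t) ^ t = ∑ x ∈ G, (a - 3 * t) ^ t := by simp
    _ ≤ ∑ x ∈ G, (t.factorial : ℝ) * ((spaced (boundaryNat x) t).card : ℝ) := sum_le_sum hlow
    _ = t.factorial * ((∑ x ∈ G, (spaced (boundaryNat x) t).card : ℕ) : ℝ) := by
      rw [← mul_sum]; push_cast; rfl
    _ ≤ t.factorial * (q : ℝ) ^ (m + 1) := by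
      gcongr
      exact_mod_cast hsum

/-! ### Strings with few run boundaries -/

lemma sum_prod_boundary (q : ℕ) (z : ℝ) (m : ℕ) :
    ∑ x : Fin (m + 1) → Fin q, ∏ i : Fin m, (if x i.castSucc ≠ x i.succ then z else 1) =
      q * (1 + ((q : ℝ) - 1) * z) ^ m := by
  induction m with
  | zero => simp
  | succ m ih =>
    rw [← (Fin.consEquiv (fun _ : Fin (m + 2) => Fin q)).sum_comp, Fintype.sum_prod_type_right,
      pow_succ, ← mul_assoc, ← ih, sum_mul]
    refine sum_congr rfl fun x _ => ?_
    have h : ∀ a : Fin q, (∏ i : Fin (m + 1),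
        (if (Fin.consEquiv (fun _ : Fin (m + 2) => Fin q)) (a, x) i.castSucc ≠
          (Fin.consEquiv (fun _ : Fin (m + 2) => Fin q)) (a, x) i.succ then z else 1)) =
        (if a ≠ x 0 then z else 1) *
          ∏ i : Fin m, (if x i.castSucc ≠ x i.succ then z else 1) := by
      intro a
      rw [Fin.prod_univ_succ]
      simp [Fin.consEquiv]
    rw [sum_congr rfl fun a _ => h a, ← sum_mul, mul_comm]
    congr 1
    have h2 : ∀ a : Fin q, (if a ≠ x 0 then z else 1) = z + (if a = x 0 then 1 - z else 0) := by
      intro a; split_ifs <;> simp_all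
    rw [sum_congr rfl fun a _ => h2 a, sum_add_distrib]
    simp
    ring

lemma sum_pow_boundary (q : ℕ) (z : ℝ) (m : ℕ) :
    ∑ x : Fin (m + 1) → Fin q, z ^ (boundary x).card = q * (1 + ((q : ℝ) - 1) * z) ^ m := by
  rw [← sum_prod_boundary]
  refine sum_congr rfl fun x _ => ?_
  rw [boundary, ← prod_const, prod_filter]

/-- Chernoff bound for the number of run boundaries. -/
lemma exists_card_bad_le (q : ℕ) (hq : 2 ≤ q) (c : ℝ) (hc0 : 0 < c) (hc : c < ((q : ℝ) - 1) / q) :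
    ∃ ρ : ℝ, 0 < ρ ∧ ρ < 1 ∧ ∀ m : ℕ,
      ((univ.filter (fun x : Fin (m + 1) → Fin q => ((boundary x).card : ℝ) ≤ c * m)).card : ℝ) ≤
        (q : ℝ) ^ (m + 1) * ρ ^ m := by
  set p : ℝ := ((q : ℝ) - 1) / q with hp
  have hq0 : (0 : ℝ) < q := by positivity
  -- the exponent `s c - p (1 - e ^ (-s))` is negative because `1 - e ^ (-s) ≥ s / (1 + s)` and
  -- `c (1 + s) < p`
  set s : ℝ := (p - c) / p / 2 with hs
  have hp0 : 0 < p := hc0.trans hc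
  have hp1 : p ≤ 1 := by rw [hp, div_le_one hq0]; linarith
  have hs0 : 0 < s := by have : 0 < p - c := by linarith
                         positivity
  refine ⟨Real.exp (s * c - p * (1 - Real.exp (-s))), Real.exp_pos _, ?_, ?_⟩
  · rw [Real.exp_lt_one_iff]
    have h1 : Real.exp (-s) ≤ 1 / (1 + s) := by
      rw [Real.exp_neg, ← one_div]
      apply one_div_le_one_div_of_le (by linarith)
      linarith [Real.add_one_le_exp s]
    have h2 : s * c < p * (1 - 1 / (1 + s)) := by
      have h3 : p * (1 - 1 / (1 + s)) = s * (p / (1 + s)) := by field_simp; ring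
      rw [h3]
      apply mul_lt_mul_of_pos_left _ hs0
      rw [lt_div_iff₀ (by linarith)]
      have h4 : s * p = (p - c) / 2 := by rw [hs]; field_simp
      have h5 : c * s ≤ s * p := by nlinarith
      nlinarith
    have h6 : p * Real.exp (-s) ≤ p * (1 / (1 + s)) := by gcongr
    linarith
  · intro m
    set A := univ.filter (fun x : Fin (m + 1) → Fin q => ((boundary x).card : ℝ) ≤ c * m) with hA
    have h1 : (A.card : ℝ) * Real.exp (-(s * (c * m))) ≤
        q * (1 + ((q : ℝ) - 1) * Real.exp (-s)) ^ m := by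
      rw [← sum_pow_boundary]
      calc (A.card : ℝ) * Real.exp (-(s * (c * m)))
          = ∑ x ∈ A, Real.exp (-(s * (c * m))) := by simp
        _ ≤ ∑ x ∈ A, Real.exp (-s) ^ (boundary x).card := by
          refine sum_le_sum fun x hx => ?_
          rw [← Real.exp_nat_mul]
          apply Real.exp_le_exp.2
          have := (mem_filter.1 hx).2
          nlinarith
        _ ≤ _ := sum_le_sum_of_subset_of_nonneg (subset_univ _) fun _ _ _ => by positivity
    have h2 : 1 + ((q : ℝ) - 1) * Real.exp (-s) ≤ q * Real.exp (-(p * (1 - Real.exp (-s)))) := by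
      have h3 := Real.add_one_le_exp (-(p * (1 - Real.exp (-s))))
      have h4 : 1 + ((q : ℝ) - 1) * Real.exp (-s) = q * (-(p * (1 - Real.exp (-s))) + 1) := by
        rw [hp]; field_simp; ring
      rw [h4]; gcongr
    have h0 : 0 ≤ 1 + ((q : ℝ) - 1) * Real.exp (-s) := by
      have : (2 : ℝ) ≤ q := by exact_mod_cast hq
      have : 0 ≤ (q : ℝ) - 1 := by linarith
      positivity
    have h5 : (A.card : ℝ) * Real.exp (-(s * (c * m))) ≤
        q * (q * Real.exp (-(p * (1 - Real.exp (-s))))) ^ m :=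
      h1.trans (by gcongr)
    have h6 : (A.card : ℝ) = A.card * Real.exp (-(s * (c * m))) * Real.exp (s * c) ^ m := by
      rw [mul_assoc, ← Real.exp_nat_mul, ← Real.exp_add]
      have : -(s * (c * m)) + m * (s * c) = 0 := by ring
      rw [this]; simp
    rw [h6]
    calc _ ≤ q * (q * Real.exp (-(p * (1 - Real.exp (-s))))) ^ m * Real.exp (s * c) ^ m := by
          gcongr
      _ = _ := by
        rw [sub_eq_add_neg (s * c), Real.exp_add, mul_pow, mul_pow, pow_succ]
        ring

/-! ### The asymptotic bound -/

lemma mstar_le (q t m : ℕ) (c ρ : ℝ) (hρ : 0 < ρ)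
    (hbad : ((univ.filter
      (fun x : Fin (m + 1) → Fin q => ((boundary x).card : ℝ) ≤ c * m)).card : ℝ) ≤
        (q : ℝ) ^ (m + 1) * ρ ^ m) (ha : 3 * t < c * m) :
    (Mstar q (m + 1) t : ℝ) ≤ (q : ℝ) ^ (m + 1) * ρ ^ m +
      t.factorial * (q : ℝ) ^ (m + 1) / (c * m - 3 * t) ^ t := by
  have hd : 0 < c * m - 3 * t := by linarith
  set R : ℝ := (q : ℝ) ^ (m + 1) * ρ ^ m +
      t.factorial * (q : ℝ) ^ (m + 1) / (c * m - 3 * t) ^ t with hR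
  have hR0 : 0 ≤ R := by positivity
  have h : Mstar q (m + 1) t ≤ ⌊R⌋₊ := by
    apply csSup_le'
    rintro k ⟨C, -, hC, rfl⟩
    apply Nat.le_floor
    have h1 := card_good_mul_le hC (c * m) ha.le
    rw [← le_div_iff₀ (by positivity)] at h1
    have h2 := card_filter_add_card_filter_not (s := C)
      (fun x => c * m < ((boundary x).card : ℝ))
    have h3 : (C.filter (fun x => ¬ c * m < ((boundary x).card : ℝ))).card ≤
        (univ.filter
          (fun x : Fin (m + 1) → Fin q => ((boundary x).card : ℝ) ≤ c * m)).card := by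
      apply card_le_card
      intro x hx
      simpa using (mem_filter.1 hx).2
    have h3' : ((C.filter (fun x => ¬ c * m < ((boundary x).card : ℝ))).card : ℝ) ≤
        (univ.filter
          (fun x : Fin (m + 1) → Fin q => ((boundary x).card : ℝ) ≤ c * m)).card := by
      exact_mod_cast h3
    have h2' : (C.card : ℝ) = (C.filter (fun x => c * m < ((boundary x).card : ℝ))).card +
        (C.filter (fun x => ¬ c * m < ((boundary x).card : ℝ))).card := by
      exact_mod_cast h2.symm
    rw [h2', hR]
    linarith
  exact le_trans (by exact_mod_cast h) (Nat.floor_le hR0)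

lemma limsup_le_of_lt (q t : ℕ) (hq : 2 ≤ q) (c : ℝ) (hc0 : 0 < c)
    (hc : c < ((q : ℝ) - 1) / q) :
    Filter.limsup
      (fun n : ℕ => (Mstar q n t : ℝ) * ((q : ℝ) - 1) ^ t * (n : ℝ) ^ t /
        ((Nat.factorial t : ℝ) * (q : ℝ) ^ (n + t)))
      Filter.atTop ≤ ((((q : ℝ) - 1) / q) / c) ^ t := by
  obtain ⟨ρ, hρ0, hρ1, hρ⟩ := exists_card_bad_le q hq c hc0 hc
  have hq0 : (0 : ℝ) < q := by positivity
  have hq1 : (0 : ℝ) ≤ (q : ℝ) - 1 := by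
    have : (2 : ℝ) ≤ q := by exact_mod_cast hq
    linarith
  set p : ℝ := ((q : ℝ) - 1) / q with hp
  have hp0 : 0 < p := hc0.trans hc
  set g : ℕ → ℝ := fun n => p ^ t / (t.factorial * ρ) * ((n : ℝ) ^ t * ρ ^ n) +
    p ^ t * ((n : ℝ) / (c * n - (c + 3 * t))) ^ t with hg
  have hlim1 : Tendsto (fun n : ℕ => (n : ℝ) ^ t * ρ ^ n) atTop (𝓝 0) :=
    tendsto_pow_const_mul_const_pow_of_abs_lt_one t (by rwa [abs_of_pos hρ0])
  have hlim2 : Tendsto (fun n : ℕ => (n : ℝ) / (c * n - (c + 3 * t))) atTop (𝓝 (1 / c)) := by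
    have h1 : Tendsto (fun n : ℕ => 1 / (c - (c + 3 * t) / (n : ℝ))) atTop
        (𝓝 (1 / (c - 0))) := by
      apply Tendsto.div tendsto_const_nhds _ (by simpa using hc0.ne')
      exact tendsto_const_nhds.sub (tendsto_const_div_atTop_nhds_zero_nat _)
    rw [sub_zero] at h1
    refine h1.congr' ?_
    filter_upwards [eventually_gt_atTop 0] with n hn
    have hn' : (n : ℝ) ≠ 0 := by positivity
    have : c * (n : ℝ) - (c + 3 * t) = n * (c - (c + 3 * t) / (n : ℝ)) := by field_simp
    rw [this, ← div_div, div_self hn']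
  have hlim : Tendsto g atTop (𝓝 ((p / c) ^ t)) := by
    have := (hlim1.const_mul (p ^ t / (t.factorial * ρ))).add ((hlim2.pow t).const_mul (p ^ t))
    convert this using 2
    rw [mul_zero, zero_add, ← mul_pow]; congr 1; ring
  rw [← hlim.limsup_eq]
  have hev : ∀ᶠ n : ℕ in atTop, (Mstar q n t : ℝ) * ((q : ℝ) - 1) ^ t * (n : ℝ) ^ t /
        ((Nat.factorial t : ℝ) * (q : ℝ) ^ (n + t)) ≤ g n := by
    have hlarge : ∀ᶠ n : ℕ in atTop, c + 3 * t < c * (n : ℝ) :=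
      (tendsto_natCast_atTop_atTop.const_mul_atTop hc0).eventually_gt_atTop _
    filter_upwards [hlarge, eventually_gt_atTop 0] with n hn hn0
    obtain ⟨m, rfl⟩ : ∃ m, n = m + 1 := ⟨n - 1, by omega⟩
    have hcm : 3 * (t : ℝ) < c * m := by push_cast at hn; linarith
    have hM := mstar_le q t m c ρ hρ0 (hρ m) hcm
    have hd : 0 < c * m - 3 * t := by linarith
    have hpq : (q : ℝ) - 1 = p * q := by rw [hp]; field_simp
    have heq : c * ((m + 1 : ℕ) : ℝ) - (c + 3 * t) = c * m - 3 * t := by push_cast; ring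
    calc _ ≤ ((q : ℝ) ^ (m + 1) * ρ ^ m +
          t.factorial * (q : ℝ) ^ (m + 1) / (c * m - 3 * t) ^ t) * ((q : ℝ) - 1) ^ t *
            ((m + 1 : ℕ) : ℝ) ^ t / ((Nat.factorial t : ℝ) * (q : ℝ) ^ (m + 1 + t)) := by
          gcongr
      _ = g (m + 1) := by
        simp only [hg]
        rw [heq, hpq, mul_pow, div_pow ((m + 1 : ℕ) : ℝ), pow_add (q : ℝ) (m + 1) t, pow_succ ρ m]
        have hf : (t.factorial : ℝ) ≠ 0 := by positivity
        clear_value p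
        have hd' := hd.ne'
        field_simp
  refine limsup_le_limsup hev ?_ ?_
  · apply IsBoundedUnder.isCoboundedUnder_le
    exact isBoundedUnder_of ⟨0, fun n => by positivity⟩
  · exact hlim.isBoundedUnder_le

theorem stmt15 (q t : ℕ) (hq : 2 ≤ q) (ht : 1 ≤ t) :
    Filter.limsup
      (fun n : ℕ => (Mstar q n t : ℝ) * ((q : ℝ) - 1) ^ t * (n : ℝ) ^ t /
        ((Nat.factorial t : ℝ) * (q : ℝ) ^ (n + t)))
      Filter.atTop ≤ 1 := by
  have hq2 : (2 : ℝ) ≤ q := by exact_mod_cast hq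
  set p : ℝ := ((q : ℝ) - 1) / q with hp
  have hp0 : 0 < p := div_pos (by linarith) (by linarith)
  have hlim : Tendsto (fun c : ℝ => (p / c) ^ t) (𝓝[<] p) (𝓝 1) := by
    have h : ContinuousAt (fun c : ℝ => (p / c) ^ t) p :=
      (continuousAt_const.div continuousAt_id hp0.ne').pow t
    have h1 : (p / p) ^ t = 1 := by rw [div_self hp0.ne', one_pow]
    have h2 := h.tendsto
    simp only [h1] at h2
    exact h2.mono_left nhdsWithin_le_nhds
  refine ge_of_tendsto hlim ?_
  filter_upwards [Ioo_mem_nhdsLT hp0] with c hc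
  exact limsup_le_of_lt q t hq c hc.1 hc.2
end

section
/- For every q ≥ 2 and every ρ ∈ [0, 1/2], the limit α_q(ρ) := lim_{n→∞} (1/n) log_2 P_q(n; ⌊ρn⌋) exists and equals (1−ρ)·H(ρ/(1−ρ)) + (1−ρ)·log_2(q) + ρ·log_2(q−1). Moreover, α_q is concave on [0,1/2] and attains its maximum at ρ* = (1/2)·(1 − √(q/(5q−4))). -/
/-- `A(x;r)`: strings obtainable from `x` by effective transpositions at exactly `r`
disjoint locations (each swapping two distinct symbols). -/
def ASet {n q : ℕ} (r : ℕ) (x : Fin n → Fin q) : Set (Fin n → Fin q) :=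
  { y | ∃ K : Finset ℕ, K.card = r ∧ ValidLocs n K ∧
      (∀ k ∈ K, ∃ h : k + 1 < n, x ⟨k, Nat.lt_of_succ_lt h⟩ ≠ x ⟨k + 1, h⟩) ∧
      ApplyLocs K x y }

/-- `P_q(n;r) = Σ_x |A(x;r)|`. -/
noncomputable def Pq (q n r : ℕ) : ℕ :=
  ∑ x : Fin n → Fin q, (ASet r x).ncard

/-- The binary entropy function `H(x) = -x log₂ x - (1-x) log₂ (1-x)` (with `H(0)=H(1)=0`). -/
noncomputable def binH (x : ℝ) : ℝ :=
  -(x * Real.logb 2 x) - (1 - x) * Real.logb 2 (1 - x)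

/-- The exponent `α_q(ρ)`. -/
noncomputable def alphaFun (q : ℕ) (ρ : ℝ) : ℝ :=
  (1 - ρ) * binH (ρ / (1 - ρ)) + (1 - ρ) * Real.logb 2 q + ρ * Real.logb 2 ((q : ℝ) - 1)

/-- The maximizer `ρ* = (1/2)(1 - √(q/(5q-4)))` of `α_q`. -/
noncomputable def rhoStar (q : ℕ) : ℝ :=
  (1 / 2) * (1 - Real.sqrt ((q : ℝ) / (5 * (q : ℝ) - 4)))

/-! ### Reduction to counting location sets -/

open scoped Classical in
/-- The valid location sets of size `r` for strings of length `n`. -/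
noncomputable def locSets (n r : ℕ) : Finset (Finset ℕ) :=
  (Finset.range n).powerset.filter fun K => K.card = r ∧ ValidLocs n K

/-- Every location of `K` is an effective transposition for `x`: the two symbols it swaps exist
and are distinct. -/
def Effective {n q : ℕ} (K : Finset ℕ) (x : Fin n → Fin q) : Prop :=
  ∀ k ∈ K, ∃ h : k + 1 < n, x ⟨k, Nat.lt_of_succ_lt h⟩ ≠ x ⟨k + 1, h⟩

open scoped Classical in
/-- The number of strings of length `n` for which all locations in `K` are effective. -/
noncomputable def effCount (q n : ℕ) (K : Finset ℕ) : ℕ :=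
  ∑ x : Fin n → Fin q, if Effective K x then 1 else 0

/-- The unique string `y` with `ApplyLocs K x y`. -/
def applyFun {n q : ℕ} (x : Fin n → Fin q) (K : Finset ℕ) : Fin n → Fin q := fun i =>
  if h : (i : ℕ) ∈ K ∧ (i : ℕ) + 1 < n then x ⟨(i : ℕ) + 1, h.2⟩
  else if (i : ℕ) ≠ 0 ∧ (i : ℕ) - 1 ∈ K then
    x ⟨(i : ℕ) - 1, lt_of_le_of_lt (Nat.sub_le _ _) i.isLt⟩
  else x i

lemma mem_locSets {n r : ℕ} {K : Finset ℕ} :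
    K ∈ locSets n r ↔ K.card = r ∧ ValidLocs n K := by
  simp only [locSets, Finset.mem_filter, Finset.mem_powerset, and_iff_right_iff_imp]
  rintro ⟨-, h, -⟩ k hk
  have := h k hk
  exact Finset.mem_range.2 (by omega)

/-- If `K` and `K'` agree below `k` and produce the same string, then `k ∈ K` forces `k ∈ K'`:
validity excludes `k - 1` from both sets, so otherwise position `k` would be changed by `K` and
left alone by `K'`. -/
lemma mem_of_applyFun_eq {n q : ℕ} {x : Fin n → Fin q} {K K' : Finset ℕ}
    (hK : ValidLocs n K) (he : Effective K x) (h : applyFun x K = applyFun x K') {k : ℕ}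
    (ih : ∀ j < k, (j ∈ K ↔ j ∈ K')) (hk : k ∈ K) : k ∈ K' := by
  by_contra hk'
  obtain ⟨hlt, hne⟩ := he k hk
  have hpred : ¬ (k ≠ 0 ∧ k - 1 ∈ K') := by
    rintro ⟨h0, h1⟩
    rw [← ih (k - 1) (by omega)] at h1
    have := hK.2 k hk (k - 1) h1 (by omega)
    omega
  have := congrFun h ⟨k, by omega⟩
  simp only [applyFun, hk, hlt, hk', hpred, and_self, false_and, dite_true, dite_false,
    if_false] at this
  exact hne this.symm

/-- Distinct valid effective location sets give distinct strings, so `|A(x;r)|` counts location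
sets. -/
lemma applyFun_injOn {n q : ℕ} (x : Fin n → Fin q) :
    Set.InjOn (applyFun x) {K | ValidLocs n K ∧ Effective K x} := by
  rintro K ⟨hK, he⟩ K' ⟨hK', he'⟩ h
  ext k
  induction k using Nat.strong_induction_on with
  | _ k ih =>
    exact ⟨mem_of_applyFun_eq hK he h ih,
      mem_of_applyFun_eq hK' he' h.symm fun j hj => (ih j hj).symm⟩

open scoped Classical in
lemma ncard_ASet {n q : ℕ} (r : ℕ) (x : Fin n → Fin q) :
    (ASet r x).ncard = ∑ K ∈ locSets n r, if Effective K x then 1 else 0 := by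
  have h : ASet r x =
      applyFun x '' (((locSets n r).filter fun K => Effective K x : Finset _) : Set _) := by
    ext y
    simp only [ASet, Set.mem_ofPred_eq, Set.mem_image, Finset.coe_filter, mem_locSets]
    constructor
    · rintro ⟨K, h1, h2, h3, h4⟩
      exact ⟨K, ⟨⟨h1, h2⟩, h3⟩, (funext h4).symm⟩
    · rintro ⟨K, ⟨⟨h1, h2⟩, h3⟩, rfl⟩
      exact ⟨K, h1, h2, h3, fun i => rfl⟩
  rw [h, Set.InjOn.ncard_image, Set.ncard_coe_finset, Finset.card_filter]
  refine (applyFun_injOn x).mono fun K hK => ?_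
  simp only [Finset.coe_filter, Set.mem_ofPred_eq, mem_locSets] at hK
  exact ⟨hK.1.2, hK.2⟩

lemma Pq_eq_sum (q n r : ℕ) : Pq q n r = ∑ K ∈ locSets n r, effCount q n K := by
  simp only [Pq, ncard_ASet, effCount]
  exact Finset.sum_comm

/-! ### Counting location sets -/

lemma validLocs_succ {n : ℕ} {K : Finset ℕ} (hn : n ∉ K) :
    ValidLocs (n + 2) K ↔ ValidLocs (n + 1) K := by
  refine and_congr_left fun _ => forall₂_congr fun k hk => ?_
  have : k ≠ n := fun h => hn (h ▸ hk)
  omega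

/-- A transposition of the last two positions `n`, `n + 1` leaves the first `n` positions free. -/
lemma validLocs_insert {n : ℕ} {K : Finset ℕ} (hn : n ∉ K) :
    ValidLocs (n + 2) (insert n K) ↔ ValidLocs n K := by
  constructor
  · rintro ⟨h1, h2⟩
    refine ⟨fun k hk => ?_, fun k hk l hl => h2 k (by simp [hk]) l (by simp [hl])⟩
    have hne : k ≠ n := fun h => hn (h ▸ hk)
    have := h1 k (by simp [hk])
    have := h2 k (by simp [hk]) n (by simp) hne
    omega
  · rintro ⟨h1, h2⟩
    refine ⟨fun k hk => ?_, fun k hk l hl hne => ?_⟩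
    · rcases Finset.mem_insert.1 hk with rfl | hk
      · omega
      · have := h1 k hk; omega
    · rcases Finset.mem_insert.1 hk with hk | hk <;> rcases Finset.mem_insert.1 hl with hl | hl
      · omega
      · have := h1 l hl; omega
      · have := h1 k hk; omega
      · exact h2 k hk l hl hne

lemma ValidLocs.notMem {n : ℕ} {K : Finset ℕ} (h : ValidLocs n K) {m : ℕ} (hm : n ≤ m + 1) :
    m ∉ K := fun hk => by have := h.1 m hk; omega

lemma locSets_succ_succ (n r : ℕ) :
    locSets (n + 2) (r + 1) = locSets (n + 1) (r + 1) ∪ (locSets n r).image (insert n) := by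
  ext K
  simp only [Finset.mem_union, Finset.mem_image, mem_locSets]
  by_cases hn : n ∈ K
  · have hK : ¬ ValidLocs (n + 1) K := fun h => h.notMem le_rfl hn
    have hn' : n ∉ K.erase n := Finset.notMem_erase n K
    simp only [hK, and_false, false_or]
    constructor
    · rintro ⟨h1, h2⟩
      refine ⟨K.erase n, ⟨by rw [Finset.card_erase_of_mem hn]; omega, ?_⟩,
        Finset.insert_erase hn⟩
      rw [← validLocs_insert hn', Finset.insert_erase hn]
      exact h2
    · rintro ⟨L, ⟨h1, h2⟩, rfl⟩
      have hL : n ∉ L := h2.notMem (by omega)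
      exact ⟨by rw [Finset.card_insert_of_notMem hL, h1], (validLocs_insert hL).2 h2⟩
  · rw [validLocs_succ hn, or_iff_left]
    rintro ⟨L, -, rfl⟩
    simp at hn

lemma card_locSets_succ_succ (n r : ℕ) :
    (locSets (n + 2) (r + 1)).card = (locSets (n + 1) (r + 1)).card + (locSets n r).card := by
  rw [locSets_succ_succ, Finset.card_union_of_disjoint, Finset.card_image_of_injOn]
  · intro K hK L hL h
    have hK := (mem_locSets.1 hK).2.notMem (m := n) (by omega)
    have hL := (mem_locSets.1 hL).2.notMem (m := n) (by omega)
    simpa [Finset.erase_insert hK, Finset.erase_insert hL] using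
      congrArg (fun M : Finset ℕ => M.erase n) h
  · rw [Finset.disjoint_left]
    rintro K hK hK'
    obtain ⟨L, -, rfl⟩ := Finset.mem_image.1 hK'
    exact (mem_locSets.1 hK).2.notMem le_rfl (Finset.mem_insert_self n L)

lemma locSets_zero (n : ℕ) : locSets n 0 = {∅} := by
  ext K
  simp only [mem_locSets, Finset.card_eq_zero, Finset.mem_singleton, and_iff_left_iff_imp]
  rintro rfl
  simp [ValidLocs]

lemma locSets_eq_empty {n : ℕ} (hn : n ≤ 1) (r : ℕ) : locSets n (r + 1) = ∅ := by
  refine Finset.eq_empty_of_forall_notMem fun K hK => ?_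
  obtain ⟨h1, h2⟩ := mem_locSets.1 hK
  obtain ⟨k, hk⟩ := Finset.card_pos.1 (by omega : 0 < K.card)
  have := h2.1 k hk
  omega

lemma card_locSets (n r : ℕ) : (locSets n r).card = (n - r).choose r := by
  induction n using Nat.strong_induction_on generalizing r with
  | _ n ih =>
    rcases r with _ | r
    · simp [locSets_zero]
    rcases n with _ | _ | n
    · simp [locSets_eq_empty]
    · simp [locSets_eq_empty]
    · rw [card_locSets_succ_succ, ih _ (by omega), ih _ (by omega)]
      rcases le_or_gt r n with h | h
      · rw [show n + 1 + 1 - (r + 1) = (n - r) + 1 by omega, Nat.choose_succ_succ,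
          show n + 1 - (r + 1) = n - r by omega, add_comm]
      · rw [show n + 1 + 1 - (r + 1) = 0 by omega, show n + 1 - (r + 1) = 0 by omega,
          show n - r = 0 by omega]
        obtain ⟨s, rfl⟩ : ∃ s, r = s + 1 := ⟨r - 1, by omega⟩
        simp

/-! ### Counting strings for a fixed location set -/

lemma effective_snoc {n q : ℕ} {K : Finset ℕ} (hK : ∀ k ∈ K, k + 1 < n) (a : Fin q)
    (x : Fin n → Fin q) :
    Effective K (Fin.snoc (α := fun _ => Fin q) x a) ↔ Effective K x := by
  refine forall₂_congr fun k hk => ?_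
  have h := hK k hk
  have h' : k < n := by omega
  simp [Fin.snoc, h, h', h.trans (Nat.lt_succ_self n)]

lemma effective_insert {n q : ℕ} {K : Finset ℕ} (hK : ∀ k ∈ K, k + 1 < n) (a b : Fin q)
    (x : Fin n → Fin q) :
    Effective (insert n K) (Fin.snoc (α := fun _ => Fin q)
      (Fin.snoc (α := fun _ => Fin q) x a : Fin (n + 1) → Fin q) b) ↔
      a ≠ b ∧ Effective K x := by
  rw [← effective_snoc hK a, ← effective_snoc (fun k hk => (hK k hk).trans (Nat.lt_succ_self n)) b]
  unfold Effective
  rw [Finset.forall_mem_insert]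
  refine and_congr_left fun _ => ?_
  simp [Fin.snoc]

open scoped Classical in
lemma effCount_succ {q n : ℕ} {K : Finset ℕ} (hK : ∀ k ∈ K, k + 1 < n) :
    effCount q (n + 1) K = q * effCount q n K := by
  unfold effCount
  rw [← (Fin.snocEquiv fun _ : Fin (n + 1) => Fin q).sum_comp, Fintype.sum_prod_type]
  have h : ∀ (a : Fin q) (x : Fin n → Fin q),
      Effective K ((Fin.snocEquiv fun _ : Fin (n + 1) => Fin q) (a, x)) ↔ Effective K x :=
    fun a x => effective_snoc hK a x
  simp [h]

open scoped Classical in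
lemma effCount_insert {q n : ℕ} {K : Finset ℕ} (hK : ∀ k ∈ K, k + 1 < n) :
    effCount q (n + 2) (insert n K) = q * (q - 1) * effCount q n K := by
  have h : ∀ b : Fin q, (∑ a : Fin q, if a ≠ b then 1 else 0) = q - 1 := by
    intro b
    rw [← Finset.card_filter, Finset.filter_ne', Finset.card_erase_of_mem (Finset.mem_univ b)]
    simp
  unfold effCount
  rw [← (Fin.snocEquiv fun _ : Fin (n + 2) => Fin q).sum_comp, Fintype.sum_prod_type]
  have h2 : ∀ b : Fin q, (∑ y : Fin (n + 1) → Fin q,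
      if Effective (insert n K) ((Fin.snocEquiv fun _ : Fin (n + 2) => Fin q) (b, y)) then 1 else 0)
      = (q - 1) * ∑ x : Fin n → Fin q, if Effective K x then 1 else 0 := by
    intro b
    rw [← (Fin.snocEquiv fun _ : Fin (n + 1) => Fin q).sum_comp, Fintype.sum_prod_type,
      ← h b, Finset.sum_mul_sum]
    refine Finset.sum_congr rfl fun a _ => Finset.sum_congr rfl fun x _ => ?_
    have he : Effective (insert n K) ((Fin.snocEquiv fun _ : Fin (n + 2) => Fin q)
        (b, (Fin.snocEquiv fun _ : Fin (n + 1) => Fin q) (a, x))) ↔ a ≠ b ∧ Effective K x :=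
      effective_insert hK a b x
    rw [if_congr he rfl rfl]
    split_ifs <;> simp_all
  rw [Finset.sum_congr rfl fun b _ => h2 b]
  simp [mul_assoc]

/-- Each location contributes `q (q - 1)` pairs of symbols and each other position `q` symbols,
i.e. the count is `q ^ (n - |K|) * (q - 1) ^ |K|`; the form below avoids the subtraction. -/
lemma effCount_mul (q n : ℕ) (K : Finset ℕ) (hK : ValidLocs n K) :
    effCount q n K * q ^ K.card = q ^ n * (q - 1) ^ K.card := by
  induction n using Nat.strong_induction_on generalizing K with
  | _ n ih =>
    rcases K.eq_empty_or_nonempty with rfl | ⟨k, hk⟩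
    · simp [effCount, Effective]
    have := hK.1 k hk
    obtain ⟨n, rfl⟩ : ∃ m, n = m + 2 := ⟨n - 2, by omega⟩
    by_cases hn : n ∈ K
    · obtain ⟨L, hL, rfl⟩ : ∃ L, n ∉ L ∧ K = insert n L :=
        ⟨K.erase n, Finset.notMem_erase n K, (Finset.insert_erase hn).symm⟩
      have hv := (validLocs_insert hL).1 hK
      rw [effCount_insert hv.1, Finset.card_insert_of_notMem hL]
      linear_combination (q * (q - 1) * q) * ih n (by omega) L hv
    · have hv := (validLocs_succ hn).1 hK
      rw [effCount_succ hv.1]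
      linear_combination q * ih (n + 1) (by omega) K hv

/-- The closed form `P_q(n;r) = C(n - r, r) q ^ (n - r) (q - 1) ^ r`, stated without dividing by
`q ^ r`. -/
lemma Pq_mul (q n r : ℕ) : Pq q n r * q ^ r = (n - r).choose r * q ^ n * (q - 1) ^ r := by
  rw [Pq_eq_sum, Finset.sum_mul, ← card_locSets, mul_assoc, ← smul_eq_mul (locSets n r).card]
  refine Finset.sum_eq_card_nsmul fun K hK => ?_
  obtain ⟨rfl, hv⟩ := mem_locSets.1 hK
  exact effCount_mul q n K hv

/-! ### Asymptotics -/

/-- The error `log n! - (n log n - n)` of the crude Stirling approximation (with value `0` at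
`n = 0`). -/
noncomputable def stirlingErr (n : ℕ) : ℝ :=
  Real.log (n.factorial) - (n * Real.log n - n)

lemma stirlingErr_succ_sub (n : ℕ) (hn : 1 ≤ n) :
    0 ≤ stirlingErr (n + 1) - stirlingErr n ∧
      stirlingErr (n + 1) - stirlingErr n ≤ Real.log (n + 1 : ℕ) - Real.log n := by
  have hn0 : (0 : ℝ) < n := by exact_mod_cast hn
  have hn1 : (0 : ℝ) < n + 1 := by positivity
  have hf : (n.factorial : ℝ) ≠ 0 := by positivity
  have hd : stirlingErr (n + 1) - stirlingErr n
      = 1 - n * (Real.log (n + 1) - Real.log n) := by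
    simp only [stirlingErr, Nat.factorial_succ]
    push_cast
    rw [Real.log_mul hn1.ne' hf]
    ring
  have hlog : Real.log (n + 1) - Real.log n = Real.log ((n + 1) / n) :=
    (Real.log_div hn1.ne' hn0.ne').symm
  have hupper := Real.log_le_sub_one_of_pos (div_pos hn1 hn0)
  have hlower := Real.one_sub_inv_le_log_of_pos (div_pos hn1 hn0)
  have e1 : (n : ℝ) * ((n + 1) / n - 1) = 1 := by field_simp; ring
  have e2 : ((n : ℝ) + 1) * (1 - ((n + 1) / n : ℝ)⁻¹) = 1 := by field_simp; ring
  rw [hd]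
  push_cast
  rw [hlog]
  constructor
  · nlinarith
  · nlinarith

lemma stirlingErr_bounds (n : ℕ) : 0 ≤ stirlingErr n ∧ stirlingErr n ≤ 1 + Real.log n := by
  rcases Nat.eq_zero_or_pos n with rfl | hn
  · simp [stirlingErr]
  induction n, hn using Nat.le_induction with
  | base => simp [stirlingErr]
  | succ n hn ih =>
    have := stirlingErr_succ_sub n hn
    constructor <;> linarith

lemma tendsto_stirlingErr_div {s : ℕ → ℕ} (hs : ∀ n, s n ≤ n) :
    Filter.Tendsto (fun n : ℕ => stirlingErr (s n) / n) Filter.atTop (nhds 0) := by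
  have hlog : Filter.Tendsto (fun n : ℕ => (1 + Real.log n) / (n : ℝ)) Filter.atTop (nhds 0) := by
    have h1 : Filter.Tendsto (fun n : ℕ => Real.log n / (n : ℝ)) Filter.atTop (nhds 0) :=
      Real.isLittleO_log_id_atTop.tendsto_div_nhds_zero.comp tendsto_natCast_atTop_atTop
    have h2 := tendsto_one_div_atTop_nhds_zero_nat (𝕜 := ℝ)
    simpa [add_div] using h2.add h1
  refine squeeze_zero (fun n => div_nonneg (stirlingErr_bounds _).1 n.cast_nonneg)
    (fun n => ?_) hlog
  gcongr
  refine (stirlingErr_bounds _).2.trans ?_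
  rcases Nat.eq_zero_or_pos (s n) with h | h
  · simpa [h] using Real.log_natCast_nonneg n
  · have : (s n : ℝ) ≤ n := by exact_mod_cast hs n
    gcongr

/-- The entropy term `(1 - ρ) H(ρ / (1 - ρ))` of `α_q(ρ)` in nats, written as
`(1 - ρ) log (1 - ρ) - ρ log ρ - (1 - 2ρ) log (1 - 2ρ)`, which is continuous on all of `ℝ`. -/
noncomputable def entropyPart (ρ : ℝ) : ℝ :=
  (1 - ρ) * Real.log (1 - ρ) - ρ * Real.log ρ - (1 - 2 * ρ) * Real.log (1 - 2 * ρ)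

lemma alphaFun_mul_log_two (q : ℕ) {ρ : ℝ} (hρ : ρ ∈ Set.Icc (0 : ℝ) (1 / 2)) :
    alphaFun q ρ * Real.log 2 =
      entropyPart ρ + (1 - ρ) * Real.log q + ρ * Real.log ((q : ℝ) - 1) := by
  obtain ⟨h0, h1⟩ := hρ
  have h2 : Real.log 2 ≠ 0 := (Real.log_pos one_lt_two).ne'
  have hm : 1 - ρ ≠ 0 := by linarith
  have e : 1 - ρ / (1 - ρ) = (1 - 2 * ρ) / (1 - ρ) := by field_simp; ring
  have key : (1 - ρ) * (-(ρ / (1 - ρ) * Real.log (ρ / (1 - ρ))) -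
      (1 - 2 * ρ) / (1 - ρ) * Real.log ((1 - 2 * ρ) / (1 - ρ))) = entropyPart ρ := by
    have ha : ρ * Real.log (ρ / (1 - ρ)) = ρ * Real.log ρ - ρ * Real.log (1 - ρ) := by
      rcases eq_or_ne ρ 0 with h | h
      · simp [h]
      · rw [Real.log_div h hm]; ring
    have hb : (1 - 2 * ρ) * Real.log ((1 - 2 * ρ) / (1 - ρ)) =
        (1 - 2 * ρ) * Real.log (1 - 2 * ρ) - (1 - 2 * ρ) * Real.log (1 - ρ) := by
      rcases eq_or_ne (1 - 2 * ρ) 0 with h | h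
      · simp [h]
      · rw [Real.log_div h hm]; ring
    have : (1 - ρ) * (-(ρ / (1 - ρ) * Real.log (ρ / (1 - ρ))) -
      (1 - 2 * ρ) / (1 - ρ) * Real.log ((1 - 2 * ρ) / (1 - ρ))) =
      -(ρ * Real.log (ρ / (1 - ρ))) - (1 - 2 * ρ) * Real.log ((1 - 2 * ρ) / (1 - ρ)) := by
      field_simp
    rw [this, ha, hb, entropyPart]
    ring
  rw [← key, alphaFun, binH, e]
  simp only [Real.logb]
  field_simp

/-- Exact expression of `log C(n - r, r)`: the linear Stirling terms and the `log n` terms cancel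
because `n - r = r + (n - 2r)`. -/
lemma log_choose {n r : ℕ} (h : 2 * r ≤ n) :
    Real.log ((n - r).choose r) = n * entropyPart (r / n) +
      (stirlingErr (n - r) - stirlingErr r - stirlingErr (n - 2 * r)) := by
  rcases Nat.eq_zero_or_pos n with rfl | hn
  · obtain rfl : r = 0 := by omega
    simp [stirlingErr]
  have hn' : (n : ℝ) ≠ 0 := by positivity
  have hscale : ∀ t : ℕ, (n : ℝ) * (t / n * Real.log (t / n)) =
      t * Real.log t - t * Real.log n := by
    intro t
    rcases Nat.eq_zero_or_pos t with rfl | ht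
    · simp
    · rw [Real.log_div (by positivity) hn']
      field_simp
  have hm : 1 - (r : ℝ) / n = ((n - r : ℕ) : ℝ) / n := by
    rw [Nat.cast_sub (by omega)]; field_simp
  have hk : 1 - 2 * ((r : ℝ) / n) = ((n - 2 * r : ℕ) : ℝ) / n := by
    rw [Nat.cast_sub h]; push_cast; field_simp
  rw [entropyPart, hm, hk, mul_sub, mul_sub, hscale, hscale, hscale]
  have hc : Real.log ((n - r).choose r) = Real.log ((n - r).factorial) - Real.log (r.factorial)
      - Real.log ((n - 2 * r).factorial) := by
    have := Nat.choose_mul_factorial_mul_factorial (n := n - r) (k := r) (by omega)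
    rw [show n - r - r = n - 2 * r by omega] at this
    have hpos : (n - r).choose r ≠ 0 := (Nat.choose_pos (by omega)).ne'
    rw [← this]
    push_cast
    rw [Real.log_mul (by positivity) (by positivity), Real.log_mul (by positivity) (by positivity)]
    ring
  rw [hc]
  simp only [stirlingErr]
  have c1 : ((n - r : ℕ) : ℝ) = n - r := Nat.cast_sub (by omega)
  have c2 : ((n - 2 * r : ℕ) : ℝ) = n - 2 * r := by rw [Nat.cast_sub h]; push_cast; ring
  rw [c1, c2]
  ring

lemma log_Pq {q n r : ℕ} (hq : 2 ≤ q) (h : 2 * r ≤ n) :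
    Real.log (Pq q n r) = n * entropyPart (r / n) +
      (stirlingErr (n - r) - stirlingErr r - stirlingErr (n - 2 * r)) +
      (n - r) * Real.log q + r * Real.log ((q : ℝ) - 1) := by
  have hq0 : (q : ℝ) ≠ 0 := by positivity
  have hq1 : (q : ℝ) - 1 ≠ 0 := by
    have : (2 : ℝ) ≤ q := by exact_mod_cast hq
    linarith
  have hc : ((n - r).choose r : ℝ) ≠ 0 := by
    exact_mod_cast (Nat.choose_pos (show r ≤ n - r by omega)).ne'
  have hmul : (Pq q n r : ℝ) * q ^ r = (n - r).choose r * q ^ n * ((q : ℝ) - 1) ^ r := by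
    have := congrArg (Nat.cast : ℕ → ℝ) (Pq_mul q n r)
    push_cast [Nat.cast_sub (show 1 ≤ q by omega)] at this
    exact this
  have hP : (Pq q n r : ℝ) ≠ 0 := by
    intro h0
    rw [h0, zero_mul] at hmul
    exact mul_ne_zero (mul_ne_zero hc (pow_ne_zero _ hq0)) (pow_ne_zero _ hq1) hmul.symm
  have := congrArg Real.log hmul
  rw [Real.log_mul hP (pow_ne_zero _ hq0),
    Real.log_mul (mul_ne_zero hc (pow_ne_zero _ hq0)) (pow_ne_zero _ hq1),
    Real.log_mul hc (pow_ne_zero _ hq0), Real.log_pow, Real.log_pow, Real.log_pow,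
    log_choose h] at this
  linarith

lemma continuous_entropyPart : Continuous entropyPart := by
  unfold entropyPart
  have h := Real.continuous_mul_log
  exact ((h.comp (continuous_const.sub continuous_id)).sub h).sub
    (h.comp (continuous_const.sub (continuous_const.mul continuous_id)))

lemma tendsto_logb_Pq {q : ℕ} (hq : 2 ≤ q) {ρ : ℝ} (hρ : ρ ∈ Set.Icc (0 : ℝ) (1 / 2)) :
    Filter.Tendsto (fun n : ℕ => Real.logb 2 (Pq q n ⌊ρ * (n : ℝ)⌋₊) / n)
      Filter.atTop (nhds (alphaFun q ρ)) := by
  have hle : ∀ n : ℕ, 2 * ⌊ρ * (n : ℝ)⌋₊ ≤ n := by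
    intro n
    have h1 : (⌊ρ * (n : ℝ)⌋₊ : ℝ) ≤ ρ * n :=
      Nat.floor_le (mul_nonneg hρ.1 n.cast_nonneg)
    have h2 : ρ * (n : ℝ) ≤ 1 / 2 * n := mul_le_mul_of_nonneg_right hρ.2 n.cast_nonneg
    have : ((2 * ⌊ρ * (n : ℝ)⌋₊ : ℕ) : ℝ) ≤ n := by push_cast; linarith
    exact_mod_cast this
  have hratio : Filter.Tendsto (fun n : ℕ => (⌊ρ * (n : ℝ)⌋₊ : ℝ) / n) Filter.atTop (nhds ρ) :=
    (tendsto_nat_floor_mul_div_atTop hρ.1).comp tendsto_natCast_atTop_atTop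
  obtain ⟨r, hr⟩ : ∃ r : ℕ → ℕ, ∀ n : ℕ, ⌊ρ * (n : ℝ)⌋₊ = r n := ⟨_, fun _ => rfl⟩
  simp only [hr] at hle hratio ⊢
  have hE1 := tendsto_stirlingErr_div (s := fun n => n - r n) fun n => Nat.sub_le _ _
  have hE2 := tendsto_stirlingErr_div (s := r) fun n => by have := hle n; omega
  have hE3 := tendsto_stirlingErr_div (s := fun n => n - 2 * r n) fun n => Nat.sub_le _ _
  have hmain := ((((continuous_entropyPart.tendsto ρ).comp hratio).add
    ((hE1.sub hE2).sub hE3)).add ((hratio.const_sub 1).mul_const (Real.log q))).add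
    (hratio.mul_const (Real.log ((q : ℝ) - 1)))
  have hlim := hmain.div_const (Real.log 2)
  have hval : (entropyPart ρ + (0 - 0 - 0) + (1 - ρ) * Real.log q +
      ρ * Real.log ((q : ℝ) - 1)) / Real.log 2 = alphaFun q ρ := by
    rw [div_eq_iff (Real.log_pos one_lt_two).ne', alphaFun_mul_log_two q hρ]
    ring
  rw [hval] at hlim
  refine hlim.congr' ?_
  filter_upwards [Filter.eventually_gt_atTop 0] with n hn
  have hn' : (n : ℝ) ≠ 0 := by positivity
  rw [Real.logb, log_Pq hq (hle n)]
  simp only [Function.comp]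
  field_simp

/-! ### Concavity and the maximum -/

/-- Gibbs' inequality: `entropyPart` lies below each of the affine functions of `ρ` indexed by
`p`. -/
lemma entropyPart_le {ρ p : ℝ} (hρ : ρ ∈ Set.Icc (0 : ℝ) (1 / 2)) (hp : p ∈ Set.Ioo (0 : ℝ) 1) :
    entropyPart ρ ≤ -(ρ * Real.log p) - (1 - 2 * ρ) * Real.log (1 - p) := by
  obtain ⟨h0, h1⟩ := hρ
  obtain ⟨hp0, hp1⟩ := hp
  have hm : 0 < 1 - ρ := by linarith
  -- `log t ≤ t - 1` at `t = (1 - ρ) w / a`; the right-hand sides for the two weights sum to zero.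
  have hterm : ∀ {a w : ℝ}, 0 ≤ a → 0 < w →
      a * Real.log (1 - ρ) + a * Real.log w - a * Real.log a ≤ (1 - ρ) * w - a := by
    intro a w ha hw
    rcases ha.eq_or_lt with rfl | ha
    · simp; positivity
    have := Real.log_le_sub_one_of_pos (div_pos (mul_pos hm hw) ha)
    rw [Real.log_div (by positivity) ha.ne', Real.log_mul hm.ne' hw.ne'] at this
    have h := mul_le_mul_of_nonneg_left this ha.le
    have e : a * ((1 - ρ) * w / a - 1) = (1 - ρ) * w - a := by field_simp
    rw [e] at h
    linarith
  have ha := hterm h0 hp0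
  have hb := hterm (show 0 ≤ 1 - 2 * ρ by linarith) (show 0 < 1 - p by linarith)
  unfold entropyPart
  linarith

/-- Equality in `entropyPart_le` at `p = ρ / (1 - ρ)`. -/
lemma entropyPart_eq {ρ : ℝ} (hρ : ρ ∈ Set.Ioo (0 : ℝ) (1 / 2)) :
    entropyPart ρ = -(ρ * Real.log (ρ / (1 - ρ))) -
      (1 - 2 * ρ) * Real.log (1 - ρ / (1 - ρ)) := by
  obtain ⟨h0, h1⟩ := hρ
  have hm : 1 - ρ ≠ 0 := by linarith
  have e : 1 - ρ / (1 - ρ) = (1 - 2 * ρ) / (1 - ρ) := by field_simp; ring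
  rw [e, Real.log_div h0.ne' hm, Real.log_div (by linarith) hm, entropyPart]
  ring

lemma ratio_mem {ρ : ℝ} (hρ : ρ ∈ Set.Ioo (0 : ℝ) (1 / 2)) :
    ρ / (1 - ρ) ∈ Set.Ioo (0 : ℝ) 1 := by
  obtain ⟨h0, h1⟩ := hρ
  exact ⟨div_pos h0 (by linarith), (div_lt_one (by linarith)).2 (by linarith)⟩

lemma concaveOn_entropyPart : ConcaveOn ℝ (Set.Icc (0 : ℝ) (1 / 2)) entropyPart := by
  refine concaveOn_iff_pairwise_pos.2 ⟨convex_Icc _ _, ?_⟩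
  intro x hx y hy hxy a b ha hb hab
  -- A proper convex combination is interior, hence has a supporting affine function.
  have hz : a • x + b • y ∈ Set.Ioo (0 : ℝ) (1 / 2) := by
    simp only [smul_eq_mul]
    have hb' : b = 1 - a := by linarith
    rcases lt_or_gt_of_ne hxy with h | h
    · constructor
      · nlinarith [hx.1, mul_nonneg ha.le hx.1, mul_pos hb (lt_of_le_of_lt hx.1 h)]
      · nlinarith [mul_pos ha (sub_pos.2 (lt_of_lt_of_le h hy.2)),
          mul_nonneg hb.le (sub_nonneg.2 hy.2)]
    · constructor
      · nlinarith [mul_nonneg hb.le hy.1, mul_pos ha (lt_of_le_of_lt hy.1 h)]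
      · nlinarith [mul_pos hb (sub_pos.2 (lt_of_lt_of_le h hx.2)),
          mul_nonneg ha.le (sub_nonneg.2 hx.2)]
  have hp := ratio_mem hz
  rw [entropyPart_eq hz]
  set p := (a • x + b • y) / (1 - (a • x + b • y))
  have h1 := mul_le_mul_of_nonneg_left (entropyPart_le hx hp) ha.le
  have h2 := mul_le_mul_of_nonneg_left (entropyPart_le hy hp) hb.le
  simp only [smul_eq_mul]
  have hb' : b = 1 - a := by linarith
  subst hb'
  linarith

lemma concaveOn_alphaFun (q : ℕ) : ConcaveOn ℝ (Set.Icc (0 : ℝ) (1 / 2)) (alphaFun q) := by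
  refine ⟨convex_Icc _ _, ?_⟩
  intro x hx y hy a b ha hb hab
  have hz := (convex_Icc (𝕜 := ℝ) (0 : ℝ) (1 / 2)) hx hy ha hb hab
  have h := concaveOn_entropyPart.2 hx hy ha hb hab
  refine le_of_mul_le_mul_right ?_ (Real.log_pos one_lt_two)
  have ex := alphaFun_mul_log_two q hx
  have ey := alphaFun_mul_log_two q hy
  rw [alphaFun_mul_log_two q hz]
  simp only [smul_eq_mul] at h ⊢
  rw [add_mul, mul_assoc, mul_assoc, ex, ey]
  obtain rfl : b = 1 - a := by linarith
  linarith

/-- `ρ*` solves the critical point equation `(q - 1) (1 - 2ρ)² = q ρ (1 - ρ)` of `α_q`. -/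
lemma rhoStar_spec {q : ℕ} (hq : 2 ≤ q) :
    rhoStar q ∈ Set.Ioo (0 : ℝ) (1 / 2) ∧
      ((q : ℝ) - 1) * (1 - 2 * rhoStar q) ^ 2 = q * (rhoStar q * (1 - rhoStar q)) := by
  have hq' : (2 : ℝ) ≤ q := by exact_mod_cast hq
  have hd : (0 : ℝ) < 5 * q - 4 := by linarith
  have hpos : 0 < (q : ℝ) / (5 * q - 4) := div_pos (by linarith) hd
  have hlt : (q : ℝ) / (5 * q - 4) < 1 := (div_lt_one hd).2 (by linarith)
  have hs0 := Real.sqrt_pos.2 hpos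
  have hs1 : Real.sqrt ((q : ℝ) / (5 * q - 4)) < 1 := by
    rw [Real.sqrt_lt' one_pos]; simpa using hlt
  have hsq := Real.sq_sqrt hpos.le
  unfold rhoStar
  set s := Real.sqrt ((q : ℝ) / (5 * q - 4))
  refine ⟨⟨by linarith, by linarith⟩, ?_⟩
  rw [eq_div_iff hd.ne'] at hsq
  linear_combination hsq / 4

lemma isMaxOn_alphaFun {q : ℕ} (hq : 2 ≤ q) :
    IsMaxOn (alphaFun q) (Set.Icc (0 : ℝ) (1 / 2)) (rhoStar q) := by
  obtain ⟨hmem, hcrit⟩ := rhoStar_spec hq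
  have hp := ratio_mem hmem
  have heq := entropyPart_eq hmem
  have hm : 0 < 1 - rhoStar q := by linarith [hmem.2]
  have hk : 0 < 1 - 2 * rhoStar q := by linarith [hmem.2]
  have hr := hmem.1
  have hq' : (2 : ℝ) ≤ q := by exact_mod_cast hq
  have hq1 : 0 < (q : ℝ) - 1 := by linarith
  have hq0 : 0 < (q : ℝ) := by linarith
  -- The affine upper bound on `α_q` touching at `ρ*` has slope zero.
  have hslope : Real.log (rhoStar q / (1 - rhoStar q)) + Real.log q =
      2 * Real.log (1 - rhoStar q / (1 - rhoStar q)) + Real.log ((q : ℝ) - 1) := by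
    have e : 1 - rhoStar q / (1 - rhoStar q) = (1 - 2 * rhoStar q) / (1 - rhoStar q) := by
      field_simp; ring
    have hl := congrArg Real.log hcrit
    rw [Real.log_mul (by positivity) (by positivity), Real.log_pow,
      Real.log_mul (by positivity) (by positivity), Real.log_mul (by positivity) (by positivity)]
      at hl
    rw [e, Real.log_div (by positivity) (by positivity), Real.log_div (by positivity) (by positivity)]
    push_cast at hl
    linarith
  intro ρ hρ
  refine le_of_mul_le_mul_right ?_ (Real.log_pos one_lt_two)
  rw [alphaFun_mul_log_two q hρ, alphaFun_mul_log_two q (Set.Ioo_subset_Icc_self hmem), heq]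
  have hle := entropyPart_le hρ hp
  set p := rhoStar q / (1 - rhoStar q)
  set l1 := Real.log p
  set l2 := Real.log (1 - p)
  have e1 : l1 = 2 * l2 + Real.log ((q : ℝ) - 1) - Real.log q := by linarith
  rw [e1] at hle ⊢
  linarith

theorem stmt16 (q : ℕ) (hq : 2 ≤ q) (ρ : ℝ) (hρ : ρ ∈ Set.Icc (0 : ℝ) (1 / 2)) :
    Filter.Tendsto
      (fun n : ℕ => Real.logb 2 (Pq q n ⌊ρ * (n : ℝ)⌋₊) / n)
      Filter.atTop (nhds (alphaFun q ρ)) ∧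
    ConcaveOn ℝ (Set.Icc (0 : ℝ) (1 / 2)) (alphaFun q) ∧
    IsMaxOn (alphaFun q) (Set.Icc (0 : ℝ) (1 / 2)) (rhoStar q) :=
  ⟨tendsto_logb_Pq hq hρ, concaveOn_alphaFun q, isMaxOn_alphaFun hq⟩
end

section
/- Let q ≥ 2 and let {A_0, A_1} be a partition of Z_q into two nonempty parts. Let P be the set of blocks { (a,a,a), (b,b,b), (a,b,b,b), (b,a,a,a), (a,a,b,b,b,b), (b,b,a,a,a,a) : a ∈ A_0, b ∈ A_1 }, and let D_q(n) ⊆ Z_q^n be the set of all strings of length n obtainable as concatenations of blocks from P. Then D_q(n) has infinite minimum distance, i.e., for all distinct x, x' ∈ D_q(n) and all integers t, s ≥ 0, B(x;t) ∩ B(x';s) = ∅; equivalently, D_q(n) corrects all possible patterns of transpositions. -/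
/-- Strings (as lists) that are concatenations of blocks from `P`. -/
inductive IsConcatOf {q : ℕ} (P : Set (List (Fin q))) : List (Fin q) → Prop
  | nil : IsConcatOf P []
  | append (b l : List (Fin q)) : b ∈ P → IsConcatOf P l → IsConcatOf P (b ++ l)

/-- The set of blocks `P` built from the partition `{A₀, A₁}` of the alphabet. -/
def blockSet {q : ℕ} (A₀ A₁ : Set (Fin q)) : Set (List (Fin q)) :=
  { w | (∃ a ∈ A₀, w = [a, a, a]) ∨ (∃ b ∈ A₁, w = [b, b, b]) ∨
        (∃ a ∈ A₀, ∃ b ∈ A₁,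
          w = [a, b, b, b] ∨ w = [b, a, a, a] ∨
          w = [a, a, b, b, b, b] ∨ w = [b, b, a, a, a, a]) }

/-- `Swaps l m`: the list `m` arises from `l` by some set of disjoint adjacent transpositions,
read from left to right. -/
inductive Swaps {α : Type*} : List α → List α → Prop
  | nil : Swaps [] []
  | keep (a : α) (l m : List α) : Swaps l m → Swaps (a :: l) (a :: m)
  | swap (a b : α) (l m : List α) : Swaps l m → Swaps (a :: b :: l) (b :: a :: m)

theorem Swaps.length_eq {α : Type*} {l m : List α} (h : Swaps l m) : l.length = m.length := by
  induction h <;> simp_all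

theorem swaps_cons_cons {α : Type*} {a b : α} {l y : List α} (h : Swaps (a :: b :: l) y) :
    (∃ y', y = a :: y' ∧ Swaps (b :: l) y') ∨ (∃ y', y = b :: a :: y' ∧ Swaps l y') := by
  cases h with
  | keep _ _ m h => exact Or.inl ⟨m, rfl, h⟩
  | swap _ _ _ m h => exact Or.inr ⟨m, rfl, h⟩

/-- Transposing two equal letters changes nothing, so the first of them may be taken as kept. -/
theorem swaps_pair {α : Type*} {u : α} {l y : List α} (h : Swaps (u :: u :: l) y) :
    ∃ y', y = u :: y' ∧ Swaps (u :: l) y' := by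
  rcases swaps_cons_cons h with h1 | ⟨y', rfl, h1⟩
  · exact h1
  · exact ⟨_, rfl, .keep u _ _ h1⟩

/-- A letter moves by at most one place. -/
theorem swaps_head {α : Type*} {u s t : α} {l y : List α} (h : Swaps (u :: l) (s :: t :: y)) :
    s = u ∨ t = u := by
  cases h <;> simp

/-- Outputs of a block `uuu` preceded by a pending letter `c`; the last `u` becomes the new pending
letter. -/
theorem swaps_three {α : Type*} {c u : α} {l y : List α} (h : Swaps (c :: u :: u :: u :: l) y) :
    ∃ p q y', y = p :: q :: u :: y' ∧ Swaps (u :: l) y' ∧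
      ((p = c ∧ q = u) ∨ (p = u ∧ q = c)) := by
  rcases swaps_cons_cons h with ⟨y, rfl, h1⟩ | ⟨y, rfl, h1⟩
  · obtain ⟨y, rfl, h2⟩ := swaps_pair h1
    obtain ⟨y, rfl, h3⟩ := swaps_pair h2
    exact ⟨_, _, _, rfl, h3, by simp⟩
  · obtain ⟨y, rfl, h2⟩ := swaps_pair h1
    exact ⟨_, _, _, rfl, h2, by simp⟩

/-- Outputs of a block `uvvv` preceded by a pending letter `c`. -/
theorem swaps_four {α : Type*} {c u v : α} {l y : List α}
    (h : Swaps (c :: u :: v :: v :: v :: l) y) :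
    ∃ p q r y', y = p :: q :: r :: v :: y' ∧ Swaps (v :: l) y' ∧
      ((p = c ∧ q = u ∧ r = v) ∨ (p = u ∧ q = c ∧ r = v) ∨ (p = c ∧ q = v ∧ r = u)) := by
  rcases swaps_cons_cons h with ⟨y, rfl, h1⟩ | ⟨y, rfl, h1⟩
  · obtain ⟨p, q, y, rfl, h2, hpq⟩ := swaps_three h1
    exact ⟨_, _, _, _, rfl, h2, by rcases hpq with ⟨rfl, rfl⟩ | ⟨rfl, rfl⟩ <;> simp⟩
  · obtain ⟨y, rfl, h2⟩ := swaps_pair h1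
    obtain ⟨y, rfl, h3⟩ := swaps_pair h2
    exact ⟨_, _, _, _, rfl, h3, by simp⟩

/-- Outputs of a block `uuvvvv` preceded by a pending letter `c`. -/
theorem swaps_six {α : Type*} {c u v : α} {l y : List α}
    (h : Swaps (c :: u :: u :: v :: v :: v :: v :: l) y) :
    ∃ p q r s y', y = p :: q :: r :: s :: v :: v :: y' ∧ Swaps (v :: l) y' ∧
      ((p = c ∧ q = u ∧ r = u ∧ s = v) ∨ (p = u ∧ q = c ∧ r = u ∧ s = v) ∨
       (p = c ∧ q = u ∧ r = v ∧ s = u) ∨ (p = u ∧ q = c ∧ r = v ∧ s = u)) := by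
  rcases swaps_cons_cons h with ⟨y, rfl, h1⟩ | ⟨y, rfl, h1⟩
  · obtain ⟨y, rfl, h2⟩ := swaps_pair h1
    obtain ⟨p, q, y, rfl, h3, hpq⟩ := swaps_three h2
    obtain ⟨y, rfl, h4⟩ := swaps_pair h3
    exact ⟨_, _, _, _, _, rfl, h4, by rcases hpq with ⟨rfl, rfl⟩ | ⟨rfl, rfl⟩ <;> simp⟩
  · obtain ⟨p, q, y, rfl, h2, hpq⟩ := swaps_three h1
    obtain ⟨y, rfl, h3⟩ := swaps_pair h2
    exact ⟨_, _, _, _, _, rfl, h3, by rcases hpq with ⟨rfl, rfl⟩ | ⟨rfl, rfl⟩ <;> simp⟩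

/-- The three shapes of blocks, with the roles of `A` and its complement left symmetric: `u` and `v`
lie on opposite sides of the partition `{A, Aᶜ}`. -/
inductive Block {α : Type*} (A : Set α) : List α → Prop
  | three (u : α) : Block A [u, u, u]
  | four (u v : α) : (u ∈ A ↔ v ∉ A) → Block A [u, v, v, v]
  | six (u v : α) : (u ∈ A ↔ v ∉ A) → Block A [u, u, v, v, v, v]

theorem block_of_mem {q : ℕ} {A₀ A₁ : Set (Fin q)} (hdisj : A₀ ∩ A₁ = ∅) {w : List (Fin q)}
    (hw : w ∈ blockSet A₀ A₁) : Block A₀ w := by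
  have hd : ∀ b ∈ A₁, b ∉ A₀ := fun b hb ha => by
    have : b ∈ A₀ ∩ A₁ := ⟨ha, hb⟩
    simp [hdisj] at this
  rcases hw with ⟨a, -, rfl⟩ | ⟨b, -, rfl⟩ | ⟨a, ha, b, hb, rfl | rfl | rfl | rfl⟩
  · exact .three a
  · exact .three b
  · exact .four a b (by simp [ha, hd b hb])
  · exact .four b a (by simp [ha, hd b hb])
  · exact .six a b (by simp [ha, hd b hb])
  · exact .six b a (by simp [ha, hd b hb])

/-- Two strings that start with a common pending letter and have a common output begin with the same
block, and what follows that block again has a common pending letter and a common output. -/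
theorem block_step {α : Type*} {A : Set α} {w w' l l' y : List α} {c : α}
    (hw : Block A w) (hw' : Block A w')
    (h : Swaps (c :: (w ++ l)) y) (h' : Swaps (c :: (w' ++ l')) y) :
    w = w' ∧ ∃ z y', Swaps (z :: l) y' ∧ Swaps (z :: l') y' := by
  -- For blocks of different lengths, the letter left pending by the shorter one has to show up
  -- within the next two letters of `y`, which `swaps_head` supplies.
  cases hw <;> cases hw' <;> simp only [List.cons_append, List.nil_append] at h h'
  · obtain ⟨p, q, y, rfl, k, e⟩ := swaps_three h
    obtain ⟨p', q', y', e', k', f⟩ := swaps_three h'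
    grind
  · obtain ⟨p, q, y, rfl, k, e⟩ := swaps_three h
    obtain ⟨p', q', r', y', e', k', f⟩ := swaps_four h'
    have := @swaps_head α
    grind
  · obtain ⟨p, q, y, rfl, k, e⟩ := swaps_three h
    obtain ⟨p', q', r', s', y', e', k', f⟩ := swaps_six h'
    have := @swaps_head α
    grind
  · obtain ⟨p, q, r, y, rfl, k, e⟩ := swaps_four h
    obtain ⟨p', q', y', e', k', f⟩ := swaps_three h'
    have := @swaps_head α
    grind
  · obtain ⟨p, q, r, y, rfl, k, e⟩ := swaps_four h
    obtain ⟨p', q', r', y', e', k', f⟩ := swaps_four h'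
    grind
  · obtain ⟨p, q, r, y, rfl, k, e⟩ := swaps_four h
    obtain ⟨p', q', r', s', y', e', k', f⟩ := swaps_six h'
    have := @swaps_head α
    grind
  · obtain ⟨p, q, r, s, y, rfl, k, e⟩ := swaps_six h
    obtain ⟨p', q', y', e', k', f⟩ := swaps_three h'
    have := @swaps_head α
    grind
  · obtain ⟨p, q, r, s, y, rfl, k, e⟩ := swaps_six h
    obtain ⟨p', q', r', y', e', k', f⟩ := swaps_four h'
    have := @swaps_head α
    grind
  · obtain ⟨p, q, r, s, y, rfl, k, e⟩ := swaps_six h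
    obtain ⟨p', q', r', s', y', e', k', f⟩ := swaps_six h'
    grind

theorem concat_unique {q : ℕ} {A₀ A₁ : Set (Fin q)} (hdisj : A₀ ∩ A₁ = ∅)
    {l l' y : List (Fin q)} {c : Fin q}
    (hl : IsConcatOf (blockSet A₀ A₁) l) (hl' : IsConcatOf (blockSet A₀ A₁) l')
    (h : Swaps (c :: l) y) (h' : Swaps (c :: l') y) : l = l' := by
  induction hl generalizing l' y c with
  | nil =>
    have := h.length_eq
    have := h'.length_eq
    exact (List.eq_nil_of_length_eq_zero (by simp_all)).symm
  | append w l hw hl ih =>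
    cases hl' with
    | nil =>
      have := h.length_eq
      have := h'.length_eq
      exact List.eq_nil_of_length_eq_zero (by simp_all)
    | append w' l' hw' hl' =>
      obtain ⟨rfl, z, y', hz, hz'⟩ :=
        block_step (block_of_mem hdisj hw) (block_of_mem hdisj hw') h h'
      rw [ih hl' hz hz']

/-- Transpositions at a set of locations `K`, described position by position, give `Swaps`. The
suffixes are treated from right to left, cutting only where no transposition crosses. -/
theorem swaps_of_applyLocs {n q : ℕ} {K : Finset ℕ} {x y : Fin n → Fin q}
    (hK : ValidLocs n K) (h : ApplyLocs K x y) : Swaps (List.ofFn x) (List.ofFn y) := by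
  suffices H : ∀ m i : ℕ, i + m = n → (i = 0 ∨ i - 1 ∉ K) →
      Swaps ((List.ofFn x).drop i) ((List.ofFn y).drop i) by
    simpa using H n 0 (by simp) (Or.inl rfl)
  intro m
  induction m using Nat.strong_induction_on with
  | _ m ih =>
    intro i hi hiK
    rcases Nat.eq_zero_or_pos m with rfl | hm
    · rw [List.drop_of_length_le (by simp; omega), List.drop_of_length_le (by simp; omega)]
      exact .nil
    have hin : i < n := by omega
    rw [List.drop_eq_getElem_cons (l := List.ofFn x) (by simpa using hin),
      List.drop_eq_getElem_cons (l := List.ofFn y) (by simpa using hin)]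
    by_cases hik : i ∈ K
    · have hi1 : i + 1 < n := hK.1 i hik
      have hi2 : i + 1 ∉ K := fun hc => by
        have := hK.2 i hik (i + 1) hc (by omega)
        omega
      rw [List.drop_eq_getElem_cons (l := List.ofFn x) (by simpa using hi1),
        List.drop_eq_getElem_cons (l := List.ofFn y) (by simpa using hi1)]
      have e1 := h ⟨i, hin⟩
      have e2 := h ⟨i + 1, hi1⟩
      simp only [hik, hi1, and_self, dite_true] at e1
      simp [hik, hi2] at e2
      simp only [List.getElem_ofFn, e1, e2]
      exact .swap _ _ _ _ (ih (m - 2) (by omega) (i + 1 + 1) (by omega) (Or.inr hi2))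
    · have e1 := h ⟨i, hin⟩
      have hn : ¬ (i ≠ 0 ∧ i - 1 ∈ K) := by tauto
      simp only [hik, hn, false_and, dite_false, if_false] at e1
      simp only [List.getElem_ofFn, e1]
      exact .keep _ _ _ (ih (m - 1) (by omega) (i + 1) (by omega) (Or.inr hik))

theorem stmt19 (q n : ℕ) (hq : 2 ≤ q) (hn : 1 ≤ n)
    (A₀ A₁ : Set (Fin q)) (hpart : A₀ ∪ A₁ = Set.univ) (hdisj : A₀ ∩ A₁ = ∅)
    (h₀ : A₀.Nonempty) (h₁ : A₁.Nonempty)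
    (D : Set (Fin n → Fin q))
    (hD : D = { x : Fin n → Fin q | IsConcatOf (blockSet A₀ A₁) (List.ofFn x) }) :
    ∀ x ∈ D, ∀ x' ∈ D, x ≠ x' → ∀ t s : ℕ, BallB t x ∩ BallB s x' = ∅ := by
  subst hD
  intro x hx x' hx' hne t s
  rw [Set.eq_empty_iff_forall_notMem]
  rintro y ⟨⟨K, -, hK, hy⟩, ⟨K', -, hK', hy'⟩⟩
  -- Any letter serves as the initial pending letter.
  obtain ⟨c, -⟩ := h₀
  exact hne (List.ofFn_injective (concat_unique hdisj hx hx'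
    (.keep c _ _ (swaps_of_applyLocs hK hy)) (.keep c _ _ (swaps_of_applyLocs hK' hy'))))
end
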